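/- Fix an initial state x ∈ ℝ^n, weights w₁, w₂ ≥ 0, and a horizon N. Then sup{ w₁ μ − w₂ ε : μ ≥ 0, ε ≥ 0, and there exists a sequence ũ(0), …, ũ(N−1) ∈ ℝ^m with ‖ũ(i)‖∞ ≤ 1 such that for every disturbance sequence d(0), …, d(N−1) with ‖d(i)‖∞ ≤ μ, the open-loop trajectory x(0) = x, x(k+1) = A_k x(k) + B_k (ε ũ(k)) + d(k) satisfies G_k x(k) ≤ H_k for all k = 0, …, N } = sup{ w₁ μ − w₂ ε : μ ≥ 0, ε ≥ 0, and there exist ũ(0), …, ũ(N−1) with ‖ũ(i)‖∞ ≤ 1 and a nonnegative matrix P ∈ ℝ^{(N+1)q × 2n(N+1)} with P A_b = μ E^{ol} and P B_b ≤ F^{ol}(x, ũ, ε) }. -/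

import Mathlib

open Matrix Finset

noncomputable section

/-- Ordered product `M (k-1) * M (k-2) * ⋯ * M i` (empty product = identity when `k ≤ i`). -/
def mprod {n : ℕ} (M : ℕ → Matrix (Fin n) (Fin n) ℝ) (i k : ℕ) :
    Matrix (Fin n) (Fin n) ℝ :=
  (((List.range' i (k - i)).reverse).map M).prod

def Abar {n m : ℕ} (A : ℕ → Matrix (Fin n) (Fin n) ℝ) (B : ℕ → Matrix (Fin n) (Fin m) ℝ)
    (α₁ : Matrix (Fin m) (Fin n) ℝ) (j : ℕ) : Matrix (Fin n) (Fin n) ℝ :=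
  A j + B j * α₁

def trajCL {n m : ℕ} (A : ℕ → Matrix (Fin n) (Fin n) ℝ) (B : ℕ → Matrix (Fin n) (Fin m) ℝ)
    (α₁ : Matrix (Fin m) (Fin n) ℝ) (α₂ : Fin m → ℝ) (d : ℕ → Fin n → ℝ)
    (x0 : Fin n → ℝ) : ℕ → Fin n → ℝ
  | 0 => x0
  | k + 1 =>
      (A k).mulVec (trajCL A B α₁ α₂ d x0 k)
        + (B k).mulVec (α₁.mulVec (trajCL A B α₁ α₂ d x0 k) + α₂) + d k

def Eblk {n : ℕ} (N : ℕ) (M : ℕ → Matrix (Fin n) (Fin n) ℝ) (k : ℕ) :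
    Matrix (Fin n) (Fin (N + 1) × Fin n) ℝ :=
  Matrix.of fun r jc =>
    if 1 ≤ (jc.1 : ℕ) ∧ (jc.1 : ℕ) ≤ k then mprod M (jc.1 : ℕ) k r jc.2 else 0

def Fblk {n m : ℕ} (A : ℕ → Matrix (Fin n) (Fin n) ℝ) (B : ℕ → Matrix (Fin n) (Fin m) ℝ)
    (α₁ : Matrix (Fin m) (Fin n) ℝ) (α₂ : Fin m → ℝ) (x : Fin n → ℝ) (k : ℕ) : Fin n → ℝ :=
  (mprod (Abar A B α₁) 0 k).mulVec x
    + ∑ i ∈ Finset.range k, (mprod (Abar A B α₁) (i + 1) k * B i).mulVec α₂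

def Ex {n m q : ℕ} (N : ℕ) (A : ℕ → Matrix (Fin n) (Fin n) ℝ)
    (B : ℕ → Matrix (Fin n) (Fin m) ℝ) (G : ℕ → Matrix (Fin q) (Fin n) ℝ)
    (α₁ : Matrix (Fin m) (Fin n) ℝ) :
    Matrix (Fin (N + 1) × Fin q) (Fin (N + 1) × Fin n) ℝ :=
  Matrix.of fun kr jc => (G (kr.1 : ℕ) * Eblk N (Abar A B α₁) (kr.1 : ℕ)) kr.2 jc

def Fx {n m q : ℕ} (N : ℕ) (A : ℕ → Matrix (Fin n) (Fin n) ℝ)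
    (B : ℕ → Matrix (Fin n) (Fin m) ℝ) (G : ℕ → Matrix (Fin q) (Fin n) ℝ)
    (H : ℕ → Fin q → ℝ) (α₁ : Matrix (Fin m) (Fin n) ℝ) (α₂ : Fin m → ℝ)
    (x : Fin n → ℝ) : Fin (N + 1) × Fin q → ℝ :=
  fun kr => H (kr.1 : ℕ) kr.2 - (G (kr.1 : ℕ)).mulVec (Fblk A B α₁ α₂ x (kr.1 : ℕ)) kr.2

def Au (m : ℕ) : Matrix (Fin m ⊕ Fin m) (Fin m) ℝ := Matrix.fromRows 1 (-1)

def Sk {n m : ℕ} (A : ℕ → Matrix (Fin n) (Fin n) ℝ) (B : ℕ → Matrix (Fin n) (Fin m) ℝ)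
    (α₁ : Matrix (Fin m) (Fin n) ℝ) (α₂ : Fin m → ℝ) (x : Fin n → ℝ) (k : ℕ) : Fin m → ℝ :=
  α₁.mulVec (Fblk A B α₁ α₂ x k) + α₂

def Ecl {n m q : ℕ} (N : ℕ) (A : ℕ → Matrix (Fin n) (Fin n) ℝ)
    (B : ℕ → Matrix (Fin n) (Fin m) ℝ) (G : ℕ → Matrix (Fin q) (Fin n) ℝ)
    (α₁ : Matrix (Fin m) (Fin n) ℝ) :
    Matrix ((Fin (N + 1) × Fin q) ⊕ (Fin N × (Fin m ⊕ Fin m))) (Fin (N + 1) × Fin n) ℝ :=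
  Matrix.fromRows (Ex N A B G α₁)
    (Matrix.of fun kr jc => (Au m * α₁ * Eblk N (Abar A B α₁) (kr.1 : ℕ)) kr.2 jc)

def Fcl {n m q : ℕ} (N : ℕ) (A : ℕ → Matrix (Fin n) (Fin n) ℝ)
    (B : ℕ → Matrix (Fin n) (Fin m) ℝ) (G : ℕ → Matrix (Fin q) (Fin n) ℝ)
    (H : ℕ → Fin q → ℝ) (α₁ : Matrix (Fin m) (Fin n) ℝ) (α₂ : Fin m → ℝ)
    (x : Fin n → ℝ) (ε : ℝ) : (Fin (N + 1) × Fin q) ⊕ (Fin N × (Fin m ⊕ Fin m)) → ℝ :=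
  Sum.elim (Fx N A B G H α₁ α₂ x)
    (fun kr => ε - (Au m).mulVec (Sk A B α₁ α₂ x (kr.1 : ℕ)) kr.2)

def AbM (N n : ℕ) :
    Matrix ((Fin (N + 1) × Fin n) ⊕ (Fin (N + 1) × Fin n)) (Fin (N + 1) × Fin n) ℝ :=
  Matrix.fromRows 1 (-1)

def BbV (N n : ℕ) : (Fin (N + 1) × Fin n) ⊕ (Fin (N + 1) × Fin n) → ℝ := fun _ => 1

def trajOL {n m : ℕ} (A : ℕ → Matrix (Fin n) (Fin n) ℝ) (B : ℕ → Matrix (Fin n) (Fin m) ℝ)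
    (u : ℕ → Fin m → ℝ) (d : ℕ → Fin n → ℝ) (x0 : Fin n → ℝ) : ℕ → Fin n → ℝ
  | 0 => x0
  | k + 1 => (A k).mulVec (trajOL A B u d x0 k) + (B k).mulVec (u k) + d k

def Eol {n q : ℕ} (N : ℕ) (A : ℕ → Matrix (Fin n) (Fin n) ℝ)
    (G : ℕ → Matrix (Fin q) (Fin n) ℝ) :
    Matrix (Fin (N + 1) × Fin q) (Fin (N + 1) × Fin n) ℝ :=
  Matrix.of fun kr jc => (G (kr.1 : ℕ) * Eblk N A (kr.1 : ℕ)) kr.2 jc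

def Fol {n m q : ℕ} (N : ℕ) (A : ℕ → Matrix (Fin n) (Fin n) ℝ)
    (B : ℕ → Matrix (Fin n) (Fin m) ℝ) (G : ℕ → Matrix (Fin q) (Fin n) ℝ)
    (H : ℕ → Fin q → ℝ) (x : Fin n → ℝ) (ut : ℕ → Fin m → ℝ) (ε : ℝ) :
    Fin (N + 1) × Fin q → ℝ :=
  fun kr => H (kr.1 : ℕ) kr.2
    - (G (kr.1 : ℕ)).mulVec ((mprod A 0 (kr.1 : ℕ)).mulVec x) kr.2
    - ε * (G (kr.1 : ℕ)).mulVec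
        (∑ i ∈ Finset.range (kr.1 : ℕ), (mprod A (i + 1) (kr.1 : ℕ) * B i).mulVec (ut i)) kr.2

/-!
By linearity, the state is a nominal term plus a linear image of the disturbances, so the
specification at level `μ` says that each row of `E z ≤ F` holds for every `z` in the box
`|z j| ≤ μ`. The worst case over the box is the choice `z j = μ * sign (E i j)`, which turns row `i`
into `∑ j, |μ * E i j| ≤ F i`. This is exactly what a certificate `P` witnesses: its two column
blocks are nonnegative matrices with difference `μ • E`, and the smallest possible row sums,
`∑ j, |μ * E i j|`, are attained by the positive and negative parts of `μ • E`. The two problems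
thus have the same feasible `(μ, ε, ũ)`.
-/

section BoxDuality

variable {R ι κ : Type*} [CommRing R] [LinearOrder R] [Fintype κ]

theorem dotProduct_le_sum_abs_mul [IsOrderedRing R] {μ : R} (hμ : 0 ≤ μ) (c : κ → R)
    {z : κ → R} (hz : ∀ j, |z j| ≤ μ) : c ⬝ᵥ z ≤ ∑ j, |μ * c j| := by
  refine Finset.sum_le_sum fun j _ => ?_
  calc c j * z j ≤ |c j| * |z j| := (le_abs_self _).trans_eq (abs_mul _ _)
    _ ≤ |c j| * μ := by gcongr; exact hz j
    _ = |μ * c j| := by rw [abs_mul, abs_of_nonneg hμ, mul_comm]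

variable [IsStrictOrderedRing R]

theorem exists_abs_le_dotProduct_eq_sum_abs_mul {μ : R} (hμ : 0 ≤ μ) (c : κ → R) :
    ∃ z : κ → R, (∀ j, |z j| ≤ μ) ∧ c ⬝ᵥ z = ∑ j, |μ * c j| := by
  refine ⟨fun j => μ * (SignType.sign (c j) : R), fun j => ?_, Finset.sum_congr rfl fun j _ => ?_⟩
  · have abs_sign_le_one : |(SignType.sign (c j) : R)| ≤ 1 := by
      cases SignType.sign (c j) <;> simp
    rw [abs_mul, abs_of_nonneg hμ]
    exact mul_le_of_le_one_right hμ abs_sign_le_one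
  · rw [abs_mul, abs_of_nonneg hμ, ← self_mul_sign, mul_left_comm]

theorem forall_abs_le_mulVec_le_iff {μ : R} (hμ : 0 ≤ μ) (E : Matrix ι κ R) (F : ι → R) :
    (∀ z : κ → R, (∀ j, |z j| ≤ μ) → E *ᵥ z ≤ F) ↔ ∀ i, ∑ j, |(μ • E) i j| ≤ F i := by
  constructor
  · intro h i
    obtain ⟨z, hz, hEz⟩ := exists_abs_le_dotProduct_eq_sum_abs_mul hμ (E i)
    exact hEz.symm.trans_le (h z hz i)
  · intro h z hz i
    exact (dotProduct_le_sum_abs_mul hμ (E i) hz).trans (h i)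

end BoxDuality

section BoxCertificate

variable {R ι κ : Type*} [Fintype κ]

theorem fromCols_mul_fromRows_one_neg_one [Ring R] [DecidableEq κ] (P Q : Matrix ι κ R) :
    fromCols P Q * (fromRows 1 (-1) : Matrix (κ ⊕ κ) κ R) = P - Q := by
  rw [fromCols_mul_fromRows, Matrix.mul_one, Matrix.mul_neg, Matrix.mul_one, sub_eq_add_neg]

theorem fromCols_mulVec_one_apply [NonAssocSemiring R] (P Q : Matrix ι κ R) (i : ι) :
    (fromCols P Q *ᵥ 1) i = ∑ j, (P i j + Q i j) := by
  simp [mulVec, dotProduct, Finset.sum_add_distrib]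

variable [Ring R] [LinearOrder R] [IsOrderedAddMonoid R] [DecidableEq κ]

theorem sum_abs_mul_fromRows_one_neg_one_le {P : Matrix ι (κ ⊕ κ) R} (hP : ∀ i j, 0 ≤ P i j)
    (i : ι) :
    ∑ j, |(P * (fromRows 1 (-1) : Matrix (κ ⊕ κ) κ R)) i j| ≤ (P *ᵥ 1) i := by
  rw [← fromCols_toCols P, fromCols_mul_fromRows_one_neg_one, fromCols_mulVec_one_apply]
  refine Finset.sum_le_sum fun j _ => (abs_sub _ _).trans_eq ?_
  exact congrArg₂ (· + ·) (abs_of_nonneg (hP i (.inl j))) (abs_of_nonneg (hP i (.inr j)))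

theorem exists_nonneg_mul_fromRows_one_neg_one_iff (E : Matrix ι κ R) (F : ι → R) :
    (∃ P : Matrix ι (κ ⊕ κ) R, (∀ i j, 0 ≤ P i j) ∧
      P * (fromRows 1 (-1) : Matrix (κ ⊕ κ) κ R) = E ∧ P *ᵥ 1 ≤ F) ↔
    ∀ i, ∑ j, |E i j| ≤ F i := by
  constructor
  · rintro ⟨P, hP, rfl, hF⟩ i
    exact (sum_abs_mul_fromRows_one_neg_one_le hP i).trans (hF i)
  · intro h
    refine ⟨fromCols (E.map (·⁺)) (E.map (·⁻)), ?_, ?_, fun i => ?_⟩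
    · rintro i (j | j)
      · exact posPart_nonneg (E i j)
      · exact negPart_nonneg (E i j)
    · rw [fromCols_mul_fromRows_one_neg_one]
      ext i j
      exact posPart_sub_negPart (E i j)
    · rw [fromCols_mulVec_one_apply]
      simpa only [map_apply, posPart_add_negPart] using h i

end BoxCertificate

section Trajectory

variable {n m q N : ℕ} (A : ℕ → Matrix (Fin n) (Fin n) ℝ) (B : ℕ → Matrix (Fin n) (Fin m) ℝ)

theorem mprod_self (k : ℕ) : mprod A k k = 1 := by
  simp [mprod]

theorem mprod_succ {i k : ℕ} (h : i ≤ k) : mprod A i (k + 1) = A k * mprod A i k := by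
  simp [mprod, Nat.succ_sub h, List.range'_concat, Nat.add_sub_cancel' h]

theorem sum_mprod_succ_mulVec (v : ℕ → Fin n → ℝ) (k : ℕ) :
    ∑ i ∈ range (k + 1), mprod A (i + 1) (k + 1) *ᵥ v i =
      A k *ᵥ ∑ i ∈ range k, mprod A (i + 1) k *ᵥ v i + v k := by
  rw [sum_range_succ, mprod_self, one_mulVec, mulVec_sum]
  congr 1
  refine sum_congr rfl fun i hi => ?_
  rw [mprod_succ A (Finset.mem_range.mp hi), mulVec_mulVec]

theorem trajOL_eq_sum (u : ℕ → Fin m → ℝ) (d : ℕ → Fin n → ℝ) (x : Fin n → ℝ) (k : ℕ) :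
    trajOL A B u d x k = mprod A 0 k *ᵥ x +
      ∑ i ∈ range k, mprod A (i + 1) k *ᵥ (B i *ᵥ u i) +
      ∑ i ∈ range k, mprod A (i + 1) k *ᵥ d i := by
  induction k with
  | zero => simp [trajOL, mprod_self]
  | succ k ih =>
    rw [trajOL, ih, sum_mprod_succ_mulVec, sum_mprod_succ_mulVec, mprod_succ A k.zero_le,
      mulVec_add, mulVec_add, mulVec_mulVec]
    abel

-- Column block `i + 1` carries the disturbance `d i`; block `0` vanishes, so `z` is free there.
theorem Eblk_mulVec {k : ℕ} (hk : k ≤ N) {d : ℕ → Fin n → ℝ} {z : Fin (N + 1) × Fin n → ℝ}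
    (hz : ∀ (i : Fin N) c, z (i.succ, c) = d i c) :
    Eblk N A k *ᵥ z = ∑ i ∈ range k, mprod A (i + 1) k *ᵥ d i := by
  ext r
  have block_zero (c : Fin n) : Eblk N A k r (0, c) = 0 := by simp [Eblk]
  have block_succ (i : Fin N) : ∑ c, Eblk N A k r (i.succ, c) * z (i.succ, c) =
      if (i : ℕ) < k then (mprod A (i + 1) k *ᵥ d i) r else 0 := by
    split_ifs with hi <;> simp [Eblk, mulVec, dotProduct, hz, Nat.succ_le_iff, hi]
  have range_filter_lt : {i ∈ range N | i < k} = range k := by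
    ext i
    simp only [mem_filter, Finset.mem_range]
    lia
  calc (Eblk N A k *ᵥ z) r
      = ∑ i : Fin N, if (i : ℕ) < k then (mprod A (i + 1) k *ᵥ d i) r else 0 := by
        simp only [mulVec, dotProduct, Fintype.sum_prod_type, Fin.sum_univ_succ,
          block_zero, block_succ, zero_mul, sum_const_zero, zero_add]
    _ = ∑ i ∈ range k, (mprod A (i + 1) k *ᵥ d i) r := by
        rw [Fin.sum_univ_eq_sum_range
          (fun i => if i < k then (mprod A (i + 1) k *ᵥ d i) r else 0), ← sum_filter,
          range_filter_lt]
    _ = (∑ i ∈ range k, mprod A (i + 1) k *ᵥ d i) r := (Finset.sum_apply _ _ _).symm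

variable (G : ℕ → Matrix (Fin q) (Fin n) ℝ) (H : ℕ → Fin q → ℝ) (x : Fin n → ℝ)
  (ut : ℕ → Fin m → ℝ) (ε : ℝ)

theorem Fol_sub_Eol_mulVec {d : ℕ → Fin n → ℝ} {z : Fin (N + 1) × Fin n → ℝ}
    (hz : ∀ (i : Fin N) c, z (i.succ, c) = d i c) (k : Fin (N + 1)) (r : Fin q) :
    Fol N A B G H x ut ε (k, r) - (Eol N A G *ᵥ z) (k, r) =
      H k r - (G k *ᵥ trajOL A B (fun i => ε • ut i) d x k) r := by
  have Eol_mulVec : (Eol N A G *ᵥ z) (k, r) =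
      (G k *ᵥ ∑ i ∈ range k, mprod A (i + 1) k *ᵥ d i) r := by
    rw [← Eblk_mulVec A k.is_le hz, mulVec_mulVec]
    rfl
  rw [Eol_mulVec, trajOL_eq_sum]
  simp only [Fol, mulVec_smul, mulVec_mulVec, ← smul_sum, mulVec_add, Pi.add_apply,
    Pi.smul_apply, smul_eq_mul]
  ring

theorem forall_mulVec_trajOL_le_iff {d : ℕ → Fin n → ℝ} {z : Fin (N + 1) × Fin n → ℝ}
    (hz : ∀ (i : Fin N) c, z (i.succ, c) = d i c) :
    (∀ k, k ≤ N → G k *ᵥ trajOL A B (fun i => ε • ut i) d x k ≤ H k) ↔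
      Eol N A G *ᵥ z ≤ Fol N A B G H x ut ε := by
  have row_le_iff (k : Fin (N + 1)) (r : Fin q) :
      (G k *ᵥ trajOL A B (fun i => ε • ut i) d x k) r ≤ H k r ↔
        (Eol N A G *ᵥ z) (k, r) ≤ Fol N A B G H x ut ε (k, r) := by
    rw [← sub_nonneg, ← Fol_sub_Eol_mulVec A B G H x ut ε hz, sub_nonneg]
  constructor
  · rintro h ⟨k, r⟩
    exact (row_le_iff k r).1 (h k k.is_le r)
  · intro h k hk r
    exact (row_le_iff ⟨k, Nat.lt_succ_of_le hk⟩ r).2 (h _)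

theorem forall_disturbance_mulVec_trajOL_le_iff {μ : ℝ} (hμ : 0 ≤ μ) :
    (∀ d : ℕ → Fin n → ℝ, (∀ i, i < N → ‖d i‖ ≤ μ) →
      ∀ k, k ≤ N → G k *ᵥ trajOL A B (fun i => ε • ut i) d x k ≤ H k) ↔
    ∀ z : Fin (N + 1) × Fin n → ℝ, (∀ jc, |z jc| ≤ μ) →
      Eol N A G *ᵥ z ≤ Fol N A B G H x ut ε := by
  constructor
  · intro h z hz
    let d : ℕ → Fin n → ℝ := fun i c => z (Fin.ofNat (N + 1) (i + 1), c)
    have z_succ (i : Fin N) (c : Fin n) : z (i.succ, c) = d i c := by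
      simp only [d, ← Fin.val_succ, Fin.ofNat_eq_cast, Fin.cast_val_eq_self]
    have norm_d_le (i : ℕ) : ‖d i‖ ≤ μ := (pi_norm_le_iff_of_nonneg hμ).2 fun c => hz _
    exact (forall_mulVec_trajOL_le_iff A B G H x ut ε z_succ).1 (h d fun i _ => norm_d_le i)
  · intro h d hd
    let z : Fin (N + 1) × Fin n → ℝ := fun jc =>
      (Fin.cons 0 fun i : Fin N => d i : Fin (N + 1) → Fin n → ℝ) jc.1 jc.2
    have abs_z_le (jc : Fin (N + 1) × Fin n) : |z jc| ≤ μ := by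
      obtain ⟨j, c⟩ := jc
      cases j using Fin.cases with
      | zero => simpa [z] using hμ
      | succ i => simpa [z] using (norm_le_pi_norm (d i) c).trans (hd i i.is_lt)
    exact (forall_mulVec_trajOL_le_iff A B G H x ut ε fun _ _ => rfl).2 (h z abs_z_le)

theorem forall_disturbance_mulVec_trajOL_le_iff_exists_certificate {μ : ℝ} (hμ : 0 ≤ μ) :
    (∀ d : ℕ → Fin n → ℝ, (∀ i, i < N → ‖d i‖ ≤ μ) →
      ∀ k, k ≤ N → G k *ᵥ trajOL A B (fun i => ε • ut i) d x k ≤ H k) ↔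
    ∃ P : Matrix (Fin (N + 1) × Fin q) ((Fin (N + 1) × Fin n) ⊕ (Fin (N + 1) × Fin n)) ℝ,
      (∀ i j, 0 ≤ P i j) ∧ P * AbM N n = μ • Eol N A G ∧
        P *ᵥ BbV N n ≤ Fol N A B G H x ut ε := by
  rw [forall_disturbance_mulVec_trajOL_le_iff A B G H x ut ε hμ, forall_abs_le_mulVec_le_iff hμ,
    ← exists_nonneg_mul_fromRows_one_neg_one_iff]
  rfl

end Trajectory

theorem pareto_openLoop_general {α : Type*} {n m q N : ℕ}
    (A : ℕ → Matrix (Fin n) (Fin n) ℝ) (B : ℕ → Matrix (Fin n) (Fin m) ℝ)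
    (G : ℕ → Matrix (Fin q) (Fin n) ℝ) (H : ℕ → Fin q → ℝ)
    (x : Fin n → ℝ) (J : ℝ → ℝ → α) :
    {v : α | ∃ (μ ε : ℝ) (ut : ℕ → Fin m → ℝ),
        0 ≤ μ ∧ 0 ≤ ε ∧ v = J μ ε ∧
        (∀ i, i < N → ‖ut i‖ ≤ 1) ∧
        ∀ d : ℕ → Fin n → ℝ, (∀ i, i < N → ‖d i‖ ≤ μ) →
          ∀ k, k ≤ N → (G k).mulVec (trajOL A B (fun i => ε • ut i) d x k) ≤ H k} =
    {v : α | ∃ (μ ε : ℝ) (ut : ℕ → Fin m → ℝ)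
        (P : Matrix (Fin (N + 1) × Fin q)
          ((Fin (N + 1) × Fin n) ⊕ (Fin (N + 1) × Fin n)) ℝ),
        0 ≤ μ ∧ 0 ≤ ε ∧ v = J μ ε ∧
        (∀ i, i < N → ‖ut i‖ ≤ 1) ∧
        (∀ i j, 0 ≤ P i j) ∧
        P * AbM N n = μ • Eol N A G ∧
        P.mulVec (BbV N n) ≤ Fol N A B G H x ut ε} := by
  ext v
  refine exists_congr fun μ => exists_congr fun ε => exists_congr fun ut => ?_
  simp only [exists_and_left]
  refine and_congr_right fun hμ => and_congr_right fun _ => and_congr_right fun _ =>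
    and_congr_right fun _ => ?_
  exact forall_disturbance_mulVec_trajOL_le_iff_exists_certificate A B G H x ut ε hμ

/-- Pareto trade-off between resilience and effort for the open-loop LTV system:
the supremum of `w₁ μ - w₂ ε` over the robust formulation equals the supremum over the
Farkas-certified formulation. -/
theorem pareto_openLoop {n m q N : ℕ}
    (A : ℕ → Matrix (Fin n) (Fin n) ℝ) (B : ℕ → Matrix (Fin n) (Fin m) ℝ)
    (G : ℕ → Matrix (Fin q) (Fin n) ℝ) (H : ℕ → Fin q → ℝ)
    (x : Fin n → ℝ) (w₁ w₂ : ℝ) (hw₁ : 0 ≤ w₁) (hw₂ : 0 ≤ w₂) :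
    sSup {v : ℝ | ∃ (μ ε : ℝ) (ut : ℕ → Fin m → ℝ),
        0 ≤ μ ∧ 0 ≤ ε ∧ v = w₁ * μ - w₂ * ε ∧
        (∀ i, i < N → ‖ut i‖ ≤ 1) ∧
        ∀ d : ℕ → Fin n → ℝ, (∀ i, i < N → ‖d i‖ ≤ μ) →
          ∀ k, k ≤ N → (G k).mulVec (trajOL A B (fun i => ε • ut i) d x k) ≤ H k} =
    sSup {v : ℝ | ∃ (μ ε : ℝ) (ut : ℕ → Fin m → ℝ)
        (P : Matrix (Fin (N + 1) × Fin q)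
          ((Fin (N + 1) × Fin n) ⊕ (Fin (N + 1) × Fin n)) ℝ),
        0 ≤ μ ∧ 0 ≤ ε ∧ v = w₁ * μ - w₂ * ε ∧
        (∀ i, i < N → ‖ut i‖ ≤ 1) ∧
        (∀ i j, 0 ≤ P i j) ∧
        P * AbM N n = μ • Eol N A G ∧
        P.mulVec (BbV N n) ≤ Fol N A B G H x ut ε} := by
  exact congrArg sSup (pareto_openLoop_general A B G H x fun μ ε => w₁ * μ - w₂ * ε)
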